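/- For all 1 ≤ i ≤ j ≤ H and every s₀ ∈ S, |V_{i:j}(s₀) − Ṽ_{i:j}(s₀)| ≤ Σ_{t=i}^{j−1} Σ_{s∈S} |((P_t − P̃_t) Ṽ_{t+1:j})(s)| · (P_{i:t−1} 𝟙_{{s}})(s₀), where 𝟙_{{s}} : S → ℝ is the indicator function of the singleton {s}. -/

import Mathlib

open Finset

/-- The operator `(P_t f)(s) = ∑_{s'} p_t(s,s') f(s')` induced by transition matrices `p`. -/
noncomputable def Pop {S : Type*} [Fintype S] (p : ℕ → S → S → ℝ) (t : ℕ) (f : S → ℝ) (s : S) : ℝ :=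
  ∑ s', p t s s' * f s'

/-- The multi-step operator `P_{i:j} = P_i P_{i+1} ⋯ P_j` (identity when `j < i`). -/
noncomputable def PC {S : Type*} [Fintype S] (p : ℕ → S → S → ℝ) (i j : ℕ) (f : S → ℝ) : S → ℝ :=
  (List.range' i (j + 1 - i)).foldr (fun t g => Pop p t g) f

/-- The value function: `V_{j:j} = r_j`, `V_{i:j} = r_i + P_i V_{i+1:j}` for `i < j`. -/
noncomputable def Vf {S : Type*} [Fintype S] (p : ℕ → S → S → ℝ) (r : ℕ → S → ℝ)
    (i j : ℕ) : S → ℝ :=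
  if _h : i < j then fun s => r i s + Pop p i (Vf p r (i + 1) j) s
  else r j
termination_by j - i
decreasing_by omega

theorem PC_of_lt {S : Type*} [Fintype S] (p : ℕ → S → S → ℝ) {i j : ℕ} (h : j < i)
    (f : S → ℝ) : PC p i j f = f := by
  simp [PC, show j + 1 - i = 0 by omega]

theorem PC_of_le {S : Type*} [Fintype S] (p : ℕ → S → S → ℝ) {i j : ℕ} (h : i ≤ j)
    (f : S → ℝ) : PC p i j f = Pop p i (PC p (i + 1) j f) := by
  simp only [PC, show j + 1 - i = (j + 1 - (i + 1)) + 1 by omega, List.range'_succ,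
    List.foldr_cons]

theorem Vf_self {S : Type*} [Fintype S] (p : ℕ → S → S → ℝ) (r : ℕ → S → ℝ) (j : ℕ) :
    Vf p r j j = r j := by
  rw [Vf, dif_neg (lt_irrefl j)]

theorem Vf_of_lt {S : Type*} [Fintype S] (p : ℕ → S → S → ℝ) (r : ℕ → S → ℝ) {i j : ℕ}
    (h : i < j) (s : S) : Vf p r i j s = r i s + Pop p i (Vf p r (i + 1) j) s := by
  rw [Vf, dif_pos h]

theorem Pop_sub {S : Type*} [Fintype S] (p : ℕ → S → S → ℝ) (t : ℕ) (f g : S → ℝ) (s : S) :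
    Pop p t f s - Pop p t g s = Pop p t (fun x => f x - g x) s := by
  simp only [Pop, mul_sub, Finset.sum_sub_distrib]

theorem abs_Pop_le {S : Type*} [Fintype S] {p : ℕ → S → S → ℝ} {t : ℕ} {s : S}
    (hp : ∀ s', 0 ≤ p t s s') {f g : S → ℝ} (h : ∀ x, |f x| ≤ g x) :
    |Pop p t f s| ≤ Pop p t g s := by
  refine (Finset.abs_sum_le_sum_abs _ _).trans (Finset.sum_le_sum fun s' _ => ?_)
  rw [abs_mul, abs_of_nonneg (hp s')]
  exact mul_le_mul_of_nonneg_left (h s') (hp s')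

theorem Pop_sum_mul {S ι : Type*} [Fintype S] (p : ℕ → S → S → ℝ) (t : ℕ) (A : Finset ι)
    (c : ι → ℝ) (f : ι → S → ℝ) (s : S) :
    Pop p t (fun x => ∑ a ∈ A, c a * f a x) s = ∑ a ∈ A, c a * Pop p t (f a) s := by
  simp only [Pop, Finset.mul_sum]
  rw [Finset.sum_comm]
  exact Finset.sum_congr rfl fun _ _ => Finset.sum_congr rfl fun _ _ => by ring

theorem Pop_sum {S ι : Type*} [Fintype S] (p : ℕ → S → S → ℝ) (t : ℕ) (A : Finset ι)
    (f : ι → S → ℝ) (s : S) :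
    Pop p t (fun x => ∑ a ∈ A, f a x) s = ∑ a ∈ A, Pop p t (f a) s := by
  simpa using Pop_sum_mul p t A (fun _ => 1) f s

/-- The value-function difference is bounded by propagated one-step model errors. -/
theorem value_difference_bound
    {S : Type*} [Fintype S] [DecidableEq S] [Nonempty S] (H : ℕ) (hH : 1 ≤ H)
    (r : ℕ → S → ℝ) (p q : ℕ → S → S → ℝ)
    (hp_nonneg : ∀ t, 1 ≤ t → t ≤ H → ∀ s s', 0 ≤ p t s s')
    (hp_sum : ∀ t, 1 ≤ t → t ≤ H → ∀ s, ∑ s', p t s s' = 1)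
    (hq_nonneg : ∀ t, 1 ≤ t → t ≤ H → ∀ s s', 0 ≤ q t s s')
    (hq_sum : ∀ t, 1 ≤ t → t ≤ H → ∀ s, ∑ s', q t s s' = 1)
    (i j : ℕ) (hi : 1 ≤ i) (hij : i ≤ j) (hj : j ≤ H) (s₀ : S) :
    |Vf p r i j s₀ - Vf q r i j s₀| ≤
      ∑ t ∈ Finset.Ico i j, ∑ s : S,
        |Pop p t (Vf q r (t + 1) j) s - Pop q t (Vf q r (t + 1) j) s| *
          PC p i (t - 1) (fun x => if x = s then (1 : ℝ) else 0) s₀ := by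
  induction hij using Nat.decreasingInduction generalizing s₀ with
  | self => simp [Vf_self]
  | of_succ k hk ih =>
    have step : Vf p r k j s₀ - Vf q r k j s₀ =
        (Pop p k (Vf q r (k + 1) j) s₀ - Pop q k (Vf q r (k + 1) j) s₀) +
          Pop p k (fun x => Vf p r (k + 1) j x - Vf q r (k + 1) j x) s₀ := by
      rw [Vf_of_lt p r hk, Vf_of_lt q r hk, ← Pop_sub]
      ring
    rw [step, Finset.sum_eq_sum_Ico_succ_bot hk]
    refine (abs_add_le _ _).trans (add_le_add ?_ ?_)
    · simp [PC_of_lt p (show k - 1 < k by omega)]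
    · refine (abs_Pop_le (hp_nonneg k hi (by omega) s₀) (ih (by omega))).trans_eq ?_
      rw [Pop_sum]
      refine Finset.sum_congr rfl fun t ht => ?_
      have hkt : k ≤ t - 1 := by
        have := (Finset.mem_Ico.mp ht).1
        omega
      rw [Pop_sum_mul]
      simp only [PC_of_le p hkt]
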